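/- arXiv:2605.11160 — 4 statements merged into one kernel-verified Lean document; each statement's English description precedes it below -/
import Mathlib

section
/- Let n : ℝ² → ℝ² be Fréchet differentiable at a point x ∈ ℝ², and suppose ‖n(y)‖ = 1 for all y in some neighborhood of x. Then for every direction u ∈ ℝ², the composition G ∘ n is Fréchet differentiable at x and ‖(fderiv (G ∘ n) x)(u)‖²_{ℝ⁴} = (4Q_c² + M_c²)·‖(fderiv n x)(u)‖²_{ℝ²}. -/
/-- The map `G : ℝ² → ℝ⁴`, `G(n) = (Q_c(2n₁² − 1), 2Q_c n₁n₂, M_c n₁, M_c n₂)`. -/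
noncomputable def mapG (Qc Mc : ℝ) (n : EuclideanSpace ℝ (Fin 2)) :
    EuclideanSpace ℝ (Fin 4) :=
  WithLp.toLp 2 (![Qc * (2 * n 0 ^ 2 - 1), 2 * Qc * n 0 * n 1, Mc * n 0, Mc * n 1] : Fin 4 → ℝ)

/-!
On each circle about `0` in `ℝ² = ℂ`, the map `R` differs from `z ↦ z ^ 2` by a constant. The
derivatives of a map of constant norm are tangent to such a circle, and on a tangent vector `v` at
`z` the derivative of `R` is the complex product `2 * z * v`, of norm `2 * ‖z‖ * ‖v‖`. The linear
part of `G` adds `Mc ^ 2 * ‖v‖ ^ 2` to the squared norm.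
-/

open scoped RealInnerProductSpace Topology

theorem inner_fderiv_eq_zero_of_eventually_norm_eq {E F : Type*} [NormedAddCommGroup E]
    [NormedSpace ℝ E] [NormedAddCommGroup F] [InnerProductSpace ℝ F] {f : E → F} {x : E} {r : ℝ}
    (hf : DifferentiableAt ℝ f x) (hr : ∀ᶠ y in 𝓝 x, ‖f y‖ = r) (u : E) :
    ⟪f x, fderiv ℝ f x u⟫ = 0 := by
  have hconst : (fun y ↦ ‖f y‖ ^ 2) =ᶠ[𝓝 x] fun _ ↦ r ^ 2 := hr.mono fun _ hy ↦ congr($hy ^ 2)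
  have hzero := hf.hasFDerivAt.norm_sq.unique
    ((hasFDerivAt_const (r ^ 2) x).congr_of_eventuallyEq hconst)
  simpa using congr($hzero u)

theorem fderiv_euclidean_apply {𝕜 E ι : Type*} [RCLike 𝕜] [NormedAddCommGroup E]
    [NormedSpace 𝕜 E] [Finite ι] {f : E → EuclideanSpace 𝕜 ι} {x : E}
    (hf : DifferentiableAt 𝕜 f x) (u : E) (i : ι) :
    fderiv 𝕜 f x u i = fderiv 𝕜 (fun y ↦ f y i) x u :=
  have hcoord : HasFDerivAt (fun y ↦ f y i) (PiLp.proj 2 (fun _ ↦ 𝕜) i ∘SL fderiv 𝕜 f x) x :=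
    hasFDerivWithinAt_univ.1 (hasFDerivWithinAt_euclidean.1 hf.hasFDerivAt.hasFDerivWithinAt i)
  congr($(hcoord.fderiv.symm) u)

section MapG

variable (Qc Mc : ℝ)

theorem differentiable_mapG : Differentiable ℝ (mapG Qc Mc) := by
  refine differentiable_euclidean.2 fun | 0 => ?_ | 1 => ?_ | 2 => ?_ | 3 => ?_
  all_goals
    simp only [mapG, Matrix.cons_val]
    fun_prop

theorem fderiv_mapG_apply (m v : EuclideanSpace ℝ (Fin 2)) :
    fderiv ℝ (mapG Qc Mc) m v =
      !₂[4 * Qc * m 0 * v 0, 2 * Qc * (m 0 * v 1 + m 1 * v 0), Mc * v 0, Mc * v 1] := by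
  have hcoord (i : Fin 2) : HasFDerivAt (fun y : EuclideanSpace ℝ (Fin 2) ↦ y i)
      (EuclideanSpace.proj i : EuclideanSpace ℝ (Fin 2) →L[ℝ] ℝ) m :=
    (EuclideanSpace.proj i : EuclideanSpace ℝ (Fin 2) →L[ℝ] ℝ).hasFDerivAt
  have hR₁ := ((((hcoord 0).pow 2).const_mul 2).sub_const 1).const_mul Qc
  have hR₂ := ((hcoord 0).const_mul (2 * Qc)).mul (hcoord 1)
  ext i
  rw [fderiv_euclidean_apply (differentiable_mapG Qc Mc m)]
  fin_cases i
  · refine congr($(hR₁.fderiv) v).trans ?_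
    simp only [Nat.add_one_sub_one, pow_one, nsmul_eq_mul, Nat.cast_ofNat, smul_apply,
      PiLp.proj_apply, smul_eq_mul, Fin.zero_eta, Matrix.cons_val_zero]
    ring
  · refine congr($(hR₂.fderiv) v).trans ?_
    simp only [add_apply, smul_apply, PiLp.proj_apply, smul_eq_mul, Fin.mk_one,
      Matrix.cons_val_one, Matrix.cons_val_zero]
    ring
  · exact congr($(((hcoord 0).const_mul Mc).fderiv) v)
  · exact congr($(((hcoord 1).const_mul Mc).fderiv) v)

theorem norm_sq_fderiv_mapG_of_inner_eq_zero {m v : EuclideanSpace ℝ (Fin 2)} (hmv : ⟪m, v⟫ = 0) :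
    ‖fderiv ℝ (mapG Qc Mc) m v‖ ^ 2 = (4 * Qc ^ 2 * ‖m‖ ^ 2 + Mc ^ 2) * ‖v‖ ^ 2 := by
  have horth : m 0 * v 0 + m 1 * v 1 = 0 := by
    simpa [PiLp.inner_apply, mul_comm] using hmv
  have hre : 4 * Qc * m 0 * v 0 = 2 * Qc * (m 0 * v 0 - m 1 * v 1) := by
    linear_combination 2 * Qc * horth
  simp only [fderiv_mapG_apply, EuclideanSpace.real_norm_sq_eq, Fin.sum_univ_four,
    Fin.sum_univ_two, Matrix.cons_val]
  calc
    (4 * Qc * m 0 * v 0) ^ 2 + (2 * Qc * (m 0 * v 1 + m 1 * v 0)) ^ 2 + (Mc * v 0) ^ 2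
        + (Mc * v 1) ^ 2
      = 4 * Qc ^ 2 * ((m 0 * v 0 - m 1 * v 1) ^ 2 + (m 0 * v 1 + m 1 * v 0) ^ 2)
          + Mc ^ 2 * (v 0 ^ 2 + v 1 ^ 2) := by rw [hre]; ring
    _ = (4 * Qc ^ 2 * (m 0 ^ 2 + m 1 ^ 2) + Mc ^ 2) * (v 0 ^ 2 + v 1 ^ 2) := by
      rw [← sq_add_sq_mul_sq_add_sq]; ring

theorem stmt_2_general {E : Type*} [NormedAddCommGroup E] [NormedSpace ℝ E]
    {n : E → EuclideanSpace ℝ (Fin 2)} {x : E} {r : ℝ} (hdiff : DifferentiableAt ℝ n x)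
    (hnorm : ∀ᶠ y in 𝓝 x, ‖n y‖ = r) :
    DifferentiableAt ℝ (mapG Qc Mc ∘ n) x ∧
      ∀ u : E, ‖fderiv ℝ (mapG Qc Mc ∘ n) x u‖ ^ 2
        = (4 * Qc ^ 2 * r ^ 2 + Mc ^ 2) * ‖fderiv ℝ n x u‖ ^ 2 := by
  have hG : DifferentiableAt ℝ (mapG Qc Mc) (n x) := differentiable_mapG Qc Mc (n x)
  refine ⟨hG.comp x hdiff, fun u ↦ ?_⟩
  have htangent : ⟪n x, fderiv ℝ n x u⟫ = 0 :=
    inner_fderiv_eq_zero_of_eventually_norm_eq hdiff hnorm u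
  rw [fderiv_comp x hG hdiff, ContinuousLinearMap.comp_apply,
    norm_sq_fderiv_mapG_of_inner_eq_zero Qc Mc htangent, hnorm.self_of_nhds]

end MapG

/-- if `n : ℝ² → ℝ²` is Fréchet differentiable at `x` and `‖n(y)‖ = 1` for all
`y` in a neighborhood of `x`, then `G ∘ n` is Fréchet differentiable at `x` and for every
direction `u ∈ ℝ²`, `‖(fderiv (G ∘ n) x)(u)‖² = (4Q_c² + M_c²)·‖(fderiv n x)(u)‖²`. -/
theorem stmt_2 (Qc Mc : ℝ) (hQc : 0 < Qc) (hMc : 0 < Mc)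
    (n : EuclideanSpace ℝ (Fin 2) → EuclideanSpace ℝ (Fin 2))
    (x : EuclideanSpace ℝ (Fin 2))
    (hdiff : DifferentiableAt ℝ n x)
    (hnorm : ∀ᶠ y in nhds x, ‖n y‖ = 1) :
    DifferentiableAt ℝ (mapG Qc Mc ∘ n) x ∧
      ∀ u : EuclideanSpace ℝ (Fin 2),
        ‖fderiv ℝ (mapG Qc Mc ∘ n) x u‖ ^ 2
          = (4 * Qc ^ 2 + Mc ^ 2) * ‖fderiv ℝ n x u‖ ^ 2 := by
  simpa only [one_pow, mul_one] using stmt_2_general Qc Mc hdiff hnorm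
end

section
/- Let n ∈ ℝ² with ‖n‖ = 1, let t := (−n₂, n₁) be the rotation of n by π/2, let ν := R(n), and let τ := (−ν₂, ν₁) be the rotation of ν by π/2. Then for every r ∈ ℝ with −1 < r < 1, the vectors n + r·t and ν + φ(r)·τ are nonzero (indeed ‖n + r·t‖ ≥ 1 and ‖ν + φ(r)·τ‖ ≥ 1), and R(P_S(n + r·t)) = P_S(ν + φ(r)·τ). -/
/-- The map `R : ℝ² → ℝ²`, `R(n) = (2n₁² − 1, 2n₁n₂) = (2 n⊗n − I)e₁`. -/
noncomputable def mapR (n : EuclideanSpace ℝ (Fin 2)) : EuclideanSpace ℝ (Fin 2) :=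
  WithLp.toLp 2 (![2 * n 0 ^ 2 - 1, 2 * n 0 * n 1] : Fin 2 → ℝ)

/-- Radial projection `P_S(x) := ‖x‖⁻¹ • x` onto the unit circle. -/
noncomputable def projS (x : EuclideanSpace ℝ (Fin 2)) : EuclideanSpace ℝ (Fin 2) :=
  ‖x‖⁻¹ • x

/-!
Identify `ℝ²` with `ℂ`. On the unit circle `R` is `z ↦ z²`, and rotation by `π/2` is
multiplication by `i`, so `n + r t` and `ν + φ(r) τ` become `(1 + i r) z` and `(1 + i φ(r)) z²`.
Since `(1 + i r)² = (1 - r²) (1 + i φ(r))` with `1 - r² > 0`, the square of the first vector is a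
positive multiple of the second.
-/

theorem normedSpace_normalize_map {V W : Type*} [NormedAddCommGroup V] [NormedSpace ℝ V]
    [NormedAddCommGroup W] [NormedSpace ℝ W] (f : V →ₗᵢ[ℝ] W) (x : V) :
    NormedSpace.normalize (f x) = f (NormedSpace.normalize x) := by
  simp only [NormedSpace.normalize, f.norm_map, map_smul]

theorem normedSpace_normalize_pow {A : Type*} [NormedRing A] [NormOneClass A] [NormMulClass A]
    [NormedAlgebra ℝ A] (a : A) (k : ℕ) :
    NormedSpace.normalize (a ^ k) = NormedSpace.normalize a ^ k := by
  simp only [NormedSpace.normalize, norm_pow, smul_pow, inv_pow]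

theorem projS_eq_normalize : projS = NormedSpace.normalize := rfl

section Complex

open Complex

theorem norm_le_norm_add_smul_I_mul (z : ℂ) (r : ℝ) : ‖z‖ ≤ ‖z + r • (I * z)‖ := by
  have one_le : 1 ≤ ‖1 + r * I‖ := by simpa using abs_re_le_norm (1 + r * I)
  calc
    ‖z‖ ≤ ‖1 + r * I‖ * ‖z‖ := le_mul_of_one_le_left (norm_nonneg z) one_le
    _ = ‖z + r • (I * z)‖ := by rw [← norm_mul, real_smul]; ring_nf

theorem add_smul_I_mul_sq (z : ℂ) {r : ℝ} (hr : r ^ 2 ≠ 1) :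
    (z + r • (I * z)) ^ 2 =
      (1 - r ^ 2) • (z ^ 2 + (2 * r / (1 - r ^ 2)) • (I * z ^ 2)) := by
  have hr' : 1 - r ^ 2 ≠ 0 := sub_ne_zero.mpr hr.symm
  rw [smul_add, smul_smul, mul_div_cancel₀ _ hr']
  simp only [real_smul, ofReal_sub, ofReal_one, ofReal_pow, ofReal_mul, ofReal_ofNat]
  linear_combination r ^ 2 * z ^ 2 * I_sq

theorem orthonormalBasisOneI_repr_I_mul (z : ℂ) :
    orthonormalBasisOneI.repr (I * z) =
      ![-(orthonormalBasisOneI.repr z 1), orthonormalBasisOneI.repr z 0] := by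
  simp [orthonormalBasisOneI_repr_apply]

theorem mapR_orthonormalBasisOneI_repr {z : ℂ} (hz : ‖z‖ = 1) :
    mapR (orthonormalBasisOneI.repr z) = orthonormalBasisOneI.repr (z ^ 2) := by
  have im_sq : z.im ^ 2 = 1 - z.re ^ 2 := by rw [← sq_norm_sub_sq_re, hz, one_pow]
  have sq_re : (z ^ 2).re = 2 * z.re ^ 2 - 1 := by
    rw [sq, mul_re, ← sq, ← sq, im_sq]; ring
  have sq_im : (z ^ 2).im = 2 * z.re * z.im := by
    rw [sq, mul_im]; ring
  apply WithLp.ofLp_injective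
  simp only [mapR, orthonormalBasisOneI_repr_apply, sq_re, sq_im, Matrix.cons_val_zero,
    Matrix.cons_val_one]

theorem projS_orthonormalBasisOneI_repr (z : ℂ) :
    projS (orthonormalBasisOneI.repr z) =
      orthonormalBasisOneI.repr (NormedSpace.normalize z) :=
  projS_eq_normalize ▸ normedSpace_normalize_map orthonormalBasisOneI.repr.toLinearIsometry z

theorem mapR_projS_orthonormalBasisOneI_repr {z : ℂ} (hz : z ≠ 0) :
    mapR (projS (orthonormalBasisOneI.repr z)) = projS (orthonormalBasisOneI.repr (z ^ 2)) := by
  rw [projS_orthonormalBasisOneI_repr, projS_orthonormalBasisOneI_repr,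
    mapR_orthonormalBasisOneI_repr (NormedSpace.norm_normalize_eq_one_iff.mpr hz),
    normedSpace_normalize_pow]

end Complex

/-- for `n` on the unit circle with `t` its rotation by `π/2`, `ν := R(n)` and
`τ` the rotation of `ν` by `π/2`, and for every `r ∈ (−1,1)` with `φ(r) := 2r/(1 − r²)`, the
vectors `n + r·t` and `ν + φ(r)·τ` are nonzero (indeed of norm `≥ 1`), and
`R(P_S(n + r·t)) = P_S(ν + φ(r)·τ)`. -/
theorem stmt_13 (n : EuclideanSpace ℝ (Fin 2)) (hn : ‖n‖ = 1)
    (t : EuclideanSpace ℝ (Fin 2)) (ht : t = (![-(n 1), n 0] : Fin 2 → ℝ))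
    (ν : EuclideanSpace ℝ (Fin 2)) (hν : ν = mapR n)
    (τ : EuclideanSpace ℝ (Fin 2)) (hτ : τ = (![-(ν 1), ν 0] : Fin 2 → ℝ))
    (r : ℝ) (hr₁ : -1 < r) (hr₂ : r < 1) :
    n + r • t ≠ 0 ∧ 1 ≤ ‖n + r • t‖ ∧
    ν + (2 * r / (1 - r ^ 2)) • τ ≠ 0 ∧ 1 ≤ ‖ν + (2 * r / (1 - r ^ 2)) • τ‖ ∧
    mapR (projS (n + r • t)) = projS (ν + (2 * r / (1 - r ^ 2)) • τ) := by
  obtain ⟨z, rfl⟩ := Complex.orthonormalBasisOneI.repr.surjective n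
  have hz : ‖z‖ = 1 := by rwa [LinearIsometryEquiv.norm_map] at hn
  obtain rfl : t = Complex.orthonormalBasisOneI.repr (Complex.I * z) :=
    WithLp.ofLp_injective 2 (ht.trans (orthonormalBasisOneI_repr_I_mul z).symm)
  obtain rfl : ν = Complex.orthonormalBasisOneI.repr (z ^ 2) :=
    hν.trans (mapR_orthonormalBasisOneI_repr hz)
  obtain rfl : τ = Complex.orthonormalBasisOneI.repr (Complex.I * z ^ 2) :=
    WithLp.ofLp_injective 2 (hτ.trans (orthonormalBasisOneI_repr_I_mul (z ^ 2)).symm)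
  have hr : r ^ 2 < 1 := (sq_lt_one_iff_abs_lt_one r).mpr (abs_lt.mpr ⟨hr₁, hr₂⟩)
  have one_le {w : ℂ} (hw : ‖w‖ = 1) (s : ℝ) : 1 ≤ ‖w + s • (Complex.I * w)‖ :=
    hw ▸ norm_le_norm_add_smul_I_mul w s
  have ne_zero {w : ℂ} (hw : 1 ≤ ‖w‖) : w ≠ 0 := norm_pos_iff.mp (one_pos.trans_le hw)
  have hz_le := one_le hz r
  have hz_sq_le := one_le (show ‖z ^ 2‖ = 1 by rw [norm_pow, hz, one_pow]) (2 * r / (1 - r ^ 2))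
  simp only [← map_smul, ← map_add, LinearIsometryEquiv.norm_map, ne_eq,
    LinearIsometryEquiv.map_eq_zero_iff]
  refine ⟨ne_zero hz_le, hz_le, ne_zero hz_sq_le, hz_sq_le, ?_⟩
  rw [mapR_projS_orthonormalBasisOneI_repr (ne_zero hz_le), add_smul_I_mul_sq z hr.ne, map_smul,
    projS_eq_normalize, NormedSpace.normalize_smul_of_pos (sub_pos.mpr hr)]
end

section
/- Let V be a finite set and let k : V × V → ℝ satisfy k(a,b) = k(b,a) for all a, b ∈ V and k(a,b) ≤ 0 whenever a ≠ b. Let d ≥ 1 and let x : V → ℝ^d satisfy ‖x(a)‖ ≥ 1 for all a ∈ V. Then −(1/2) ∑_{a∈V} ∑_{b∈V} k(a,b) ‖P_S(x(a)) − P_S(x(b))‖² ≤ −(1/2) ∑_{a∈V} ∑_{b∈V} k(a,b) ‖x(a) − x(b)‖², where P_S(x) := ‖x‖⁻¹ • x. -/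
/-! Pulling `x` and `y` back to the unit sphere discards the radial part of `x - y` and shrinks the
rest: `‖x‖ ‖y‖ ‖x/‖x‖ - y/‖y‖‖² = ‖x - y‖² - (‖x‖ - ‖y‖)²`. So it shortens all distances between
vectors of norm at least `1`, and since the weights `-k a b` with `a ≠ b` are nonnegative, the
energy decreases. -/

section Normalize

open NormedSpace (normalize)

variable {E : Type*} [NormedAddCommGroup E] [InnerProductSpace ℝ E] {x y : E}

lemma norm_mul_norm_mul_norm_normalize_sub_sq (x y : E) :
    ‖x‖ * ‖y‖ * ‖normalize x - normalize y‖ ^ 2 = ‖x - y‖ ^ 2 - (‖x‖ - ‖y‖) ^ 2 := by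
  obtain rfl | hx := eq_or_ne x 0
  · simp
  obtain rfl | hy := eq_or_ne y 0
  · simp
  have inner_eq : inner ℝ x y = ‖x‖ * ‖y‖ * inner ℝ (normalize x) (normalize y) := by
    conv_lhs => rw [← NormedSpace.norm_smul_normalize x, ← NormedSpace.norm_smul_normalize y]
    rw [real_inner_smul_left, real_inner_smul_right, mul_assoc]
  rw [norm_sub_sq_real, norm_sub_sq_real, NormedSpace.norm_normalize hx,
    NormedSpace.norm_normalize hy, inner_eq]
  ring

lemma norm_normalize_sub_le_norm_sub (h : 1 ≤ ‖x‖ * ‖y‖) :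
    ‖normalize x - normalize y‖ ≤ ‖x - y‖ := by
  refine (sq_le_sq₀ (norm_nonneg _) (norm_nonneg _)).1 ?_
  calc ‖normalize x - normalize y‖ ^ 2
      ≤ ‖x‖ * ‖y‖ * ‖normalize x - normalize y‖ ^ 2 := le_mul_of_one_le_left (sq_nonneg _) h
    _ = ‖x - y‖ ^ 2 - (‖x‖ - ‖y‖) ^ 2 := norm_mul_norm_mul_norm_normalize_sub_sq x y
    _ ≤ ‖x - y‖ ^ 2 := sub_le_self _ (sq_nonneg _)

end Normalize

section KernelEnergy

variable {V E F : Type*} [Fintype V] {k : V → V → ℝ}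

/-- The Dirichlet energy of a vector-valued function with respect to the kernel `k`, whose
off-diagonal entries are the negatives of the edge weights (as in a graph Laplacian). The factor
`1 / 2` is there because the double sum runs over ordered pairs. -/
noncomputable def kernelEnergy [SeminormedAddCommGroup E] (k : V → V → ℝ) (f : V → E) : ℝ :=
  -(1 / 2) * ∑ a, ∑ b, k a b * ‖f a - f b‖ ^ 2

lemma kernelEnergy_le_kernelEnergy [SeminormedAddCommGroup E] [SeminormedAddCommGroup F]
    (hk : Pairwise fun a b ↦ k a b ≤ 0) {f : V → E} {g : V → F}
    (hfg : Pairwise fun a b ↦ ‖f a - f b‖ ≤ ‖g a - g b‖) :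
    kernelEnergy k f ≤ kernelEnergy k g := by
  refine mul_le_mul_of_nonpos_left (Finset.sum_le_sum fun a _ ↦ Finset.sum_le_sum fun b _ ↦ ?_)
    (by norm_num)
  obtain rfl | hab := eq_or_ne a b
  · simp
  · exact mul_le_mul_of_nonpos_left (pow_le_pow_left₀ (norm_nonneg _) (hfg hab) 2) (hk hab)

theorem stmt_14_general [NormedAddCommGroup E] [InnerProductSpace ℝ E]
    (hk : Pairwise fun a b ↦ k a b ≤ 0) {x : V → E}
    (hx : Pairwise fun a b ↦ 1 ≤ ‖x a‖ * ‖x b‖) :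
    kernelEnergy k (fun a ↦ NormedSpace.normalize (x a)) ≤ kernelEnergy k x :=
  kernelEnergy_le_kernelEnergy hk fun _ _ hab ↦ norm_normalize_sub_le_norm_sub (hx hab)

end KernelEnergy

/-- for a finite set `V`, a symmetric kernel `k` with nonpositive off-diagonal
entries, `d ≥ 1` and `x : V → ℝ^d` with `‖x(a)‖ ≥ 1` for all `a`, one has
`−(1/2) ∑ₐ∑_b k(a,b) ‖P_S(x(a)) − P_S(x(b))‖² ≤ −(1/2) ∑ₐ∑_b k(a,b) ‖x(a) − x(b)‖²`,
where `P_S(x) := ‖x‖⁻¹ • x`. -/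
theorem stmt_14 {V : Type*} [Fintype V] (k : V → V → ℝ)
    (hsym : ∀ a b, k a b = k b a)
    (hoff : ∀ a b, a ≠ b → k a b ≤ 0)
    (d : ℕ) (hd : 1 ≤ d) (x : V → EuclideanSpace ℝ (Fin d))
    (hx : ∀ a, 1 ≤ ‖x a‖) :
    -(1 / 2) * ∑ a, ∑ b, k a b * ‖‖x a‖⁻¹ • x a - ‖x b‖⁻¹ • x b‖ ^ 2
      ≤ -(1 / 2) * ∑ a, ∑ b, k a b * ‖x a - x b‖ ^ 2 :=
  stmt_14_general hoff fun a b _ ↦ one_le_mul_of_one_le_of_one_le (hx a) (hx b)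
end

section
/- Let V be a finite set and let k : V × V → ℝ satisfy k(a,b) = k(b,a) for all a, b ∈ V, ∑_{b∈V} k(a,b) = 0 for all a ∈ V, and k(a,b) ≤ 0 whenever a ≠ b. Let n : V → ℝ² satisfy ‖n(a)‖ = 1 for all a ∈ V; set t(a) := (−n(a)₂, n(a)₁), ν(a) := R(n(a)), and τ(a) := (−ν(a)₂, ν(a)₁). Let γ ∈ (0,1) and define, for r : V → ℝ with |r(a)| ≤ γ for all a, F(r) := −(1/2) ∑_{a∈V} ∑_{b∈V} k(a,b) { Q_c² ‖(ν(a) + φ(r(a))·τ(a)) − (ν(b) + φ(r(b))·τ(b))‖² + M_c² ‖(n(a) + r(a)·t(a)) − (n(b) + r(b)·t(b))‖² }. Suppose r* : V → ℝ satisfies |r*(a)| ≤ γ for all a ∈ V and F(r*) ≤ F(0) (where 0 denotes the zero map). Define the updated vectors n⁺(a) := P_S(n(a) + r*(a)·t(a)) and ν⁺(a) := R(n⁺(a)). Then −(1/2) ∑_{a∈V} ∑_{b∈V} k(a,b) { Q_c² ‖ν⁺(a) − ν⁺(b)‖² + M_c² ‖n⁺(a) − n⁺(b)‖² } ≤ −(1/2)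 ∑_{a∈V} ∑_{b∈V} k(a,b) { Q_c² ‖ν(a) − ν(b)‖² + M_c² ‖n(a) − n(b)‖² }; in particular the discrete harmonic energy does not increase under the update. -/
/-!
In complex notation `R(n) = n²` on unit vectors and `t = i n`, so that
`(n + r t)² = (1 + i r)² n² = (1 - r²) (ν + φ(r) τ)`: this is the double-angle formula for the
tangent. Hence `ν⁺ = R(P_S(n + r t)) = P_S(ν + φ(r) τ)`, that is, both updated fields arise by
normalizing vectors tangentially displaced from the unit circle. Such vectors have norm at least
`1`, where `P_S` is nonexpansive; since the off-diagonal weights `-k(a,b)` are nonnegative,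
normalizing can only lower the energy `F(r*)`, which is at most `F(0)`.
-/

open NormedSpace (normalize)

section Normalize

variable {E : Type*} [NormedAddCommGroup E] [InnerProductSpace ℝ E]

theorem norm_sub_sq_eq_add_norm_normalize_sub_sq (x y : E) :
    ‖x - y‖ ^ 2 = (‖x‖ - ‖y‖) ^ 2 + ‖x‖ * ‖y‖ * ‖normalize x - normalize y‖ ^ 2 := by
  rcases eq_or_ne x 0 with rfl | hx
  · simp
  rcases eq_or_ne y 0 with rfl | hy
  · simp
  have hinner : inner ℝ x y = ‖x‖ * ‖y‖ * inner ℝ (normalize x) (normalize y) := by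
    conv_lhs => rw [← NormedSpace.norm_smul_normalize x, ← NormedSpace.norm_smul_normalize y]
    rw [real_inner_smul_left, real_inner_smul_right, mul_assoc]
  rw [norm_sub_sq_real, norm_sub_sq_real, NormedSpace.norm_normalize hx,
    NormedSpace.norm_normalize hy, hinner]
  ring

theorem norm_normalize_sub_normalize_le {x y : E} (hx : 1 ≤ ‖x‖) (hy : 1 ≤ ‖y‖) :
    ‖normalize x - normalize y‖ ≤ ‖x - y‖ := by
  rw [← sq_le_sq₀ (norm_nonneg _) (norm_nonneg _)]
  calc ‖normalize x - normalize y‖ ^ 2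
      ≤ ‖x‖ * ‖y‖ * ‖normalize x - normalize y‖ ^ 2 :=
        le_mul_of_one_le_left (sq_nonneg _) (one_le_mul_of_one_le_of_one_le hx hy)
    _ ≤ ‖x - y‖ ^ 2 := by
        rw [norm_sub_sq_eq_add_norm_normalize_sub_sq x y]
        exact le_add_of_nonneg_left (sq_nonneg _)

end Normalize

section Energy

variable {V : Type*} [Fintype V]
  {E : Type*} [NormedAddCommGroup E] {E' : Type*} [NormedAddCommGroup E']

/-- The discrete harmonic energy of a pair of fields `ν`, `n` with interaction kernel `k` and
weights `Q ^ 2`, `M ^ 2`. The fields need not have unit length, so that the functional `F` is the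
energy of the tangentially displaced fields. -/
noncomputable def harmonicEnergy (Q M : ℝ) (k : V → V → ℝ) (ν : V → E) (n : V → E') : ℝ :=
  -(1 / 2) * ∑ a, ∑ b, k a b * (Q ^ 2 * ‖ν a - ν b‖ ^ 2 + M ^ 2 * ‖n a - n b‖ ^ 2)

theorem harmonicEnergy_le_of_norm_sub_le {F : Type*} [NormedAddCommGroup F]
    {F' : Type*} [NormedAddCommGroup F'] (Q M : ℝ) {k : V → V → ℝ}
    (hk : ∀ a b, a ≠ b → k a b ≤ 0) {ν : V → E} {n : V → E'} {μ : V → F} {m : V → F'}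
    (hν : ∀ a b, ‖ν a - ν b‖ ≤ ‖μ a - μ b‖) (hn : ∀ a b, ‖n a - n b‖ ≤ ‖m a - m b‖) :
    harmonicEnergy Q M k ν n ≤ harmonicEnergy Q M k μ m := by
  refine mul_le_mul_of_nonpos_left
    (Finset.sum_le_sum fun a _ => Finset.sum_le_sum fun b _ => ?_) (by norm_num)
  obtain rfl | hab := eq_or_ne a b
  · simp
  · refine mul_le_mul_of_nonpos_left ?_ (hk a b hab)
    gcongr
    exacts [hν a b, hn a b]

theorem harmonicEnergy_normalize_le [InnerProductSpace ℝ E] [InnerProductSpace ℝ E'] (Q M : ℝ)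
    {k : V → V → ℝ} (hk : ∀ a b, a ≠ b → k a b ≤ 0) {ν : V → E} {n : V → E'}
    (hν : ∀ a, 1 ≤ ‖ν a‖) (hn : ∀ a, 1 ≤ ‖n a‖) :
    harmonicEnergy Q M k (fun a => normalize (ν a)) (fun a => normalize (n a)) ≤
      harmonicEnergy Q M k ν n :=
  harmonicEnergy_le_of_norm_sub_le Q M hk
    (fun a b => norm_normalize_sub_normalize_le (hν a) (hν b))
    (fun a b => norm_normalize_sub_normalize_le (hn a) (hn b))

end Energy

section Plane

/-- The rotation of the plane by `π / 2`, that is, multiplication by `i` under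
`(x₁, x₂) ↦ x₁ + i x₂`; it yields the tangents `t` and `τ`. -/
noncomputable def rotQuarter (x : EuclideanSpace ℝ (Fin 2)) : EuclideanSpace ℝ (Fin 2) :=
  !₂[-x 1, x 0]

/-- Complex squaring `z ↦ z²` under `(x₁, x₂) ↦ x₁ + i x₂`: the extension of `mapR` from the unit
circle to the plane that is homogeneous of degree two. -/
noncomputable def planeSq (x : EuclideanSpace ℝ (Fin 2)) : EuclideanSpace ℝ (Fin 2) :=
  !₂[x 0 ^ 2 - x 1 ^ 2, 2 * x 0 * x 1]

variable (x : EuclideanSpace ℝ (Fin 2)) (r : ℝ)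

theorem inner_rotQuarter_right_self : inner ℝ x (rotQuarter x) = 0 := by
  simp only [rotQuarter, PiLp.inner_apply, Fin.sum_univ_two, RCLike.inner_apply, conj_trivial,
    Matrix.cons_val_zero, Matrix.cons_val_one]
  ring

theorem norm_le_norm_add_smul_rotQuarter : ‖x‖ ≤ ‖x + r • rotQuarter x‖ := by
  have horth : inner ℝ x (r • rotQuarter x) = 0 := by
    rw [real_inner_smul_right, inner_rotQuarter_right_self, mul_zero]
  rw [mul_self_le_mul_self_iff (norm_nonneg _) (norm_nonneg _),
    norm_add_sq_eq_norm_sq_add_norm_sq_real horth]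
  exact le_add_of_nonneg_right (mul_self_nonneg _)

theorem norm_planeSq : ‖planeSq x‖ = ‖x‖ ^ 2 := by
  rw [← sq_eq_sq₀ (norm_nonneg _) (sq_nonneg _)]
  simp only [EuclideanSpace.real_norm_sq_eq, Fin.sum_univ_two, planeSq, Matrix.cons_val_zero,
    Matrix.cons_val_one]
  ring

theorem planeSq_smul : planeSq (r • x) = r ^ 2 • planeSq x := by
  ext i
  fin_cases i <;>
    simp only [planeSq, PiLp.smul_apply, smul_eq_mul, Fin.zero_eta, Fin.mk_one,
      Matrix.cons_val_zero, Matrix.cons_val_one] <;>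
    ring

theorem planeSq_normalize : planeSq (normalize x) = normalize (planeSq x) := by
  rw [NormedSpace.normalize, NormedSpace.normalize, planeSq_smul, norm_planeSq, inv_pow]

theorem planeSq_add_smul_rotQuarter :
    planeSq (x + r • rotQuarter x) =
      (1 - r ^ 2) • planeSq x + (2 * r) • rotQuarter (planeSq x) := by
  ext i
  fin_cases i <;>
    simp only [planeSq, rotQuarter, PiLp.add_apply, PiLp.smul_apply, smul_eq_mul, Fin.zero_eta,
      Fin.mk_one, Matrix.cons_val_zero, Matrix.cons_val_one] <;>
    ring

variable {x r}

theorem mapR_eq_planeSq (hx : ‖x‖ = 1) : mapR x = planeSq x := by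
  have hsq : x 0 ^ 2 + x 1 ^ 2 = 1 := by
    rw [← Fin.sum_univ_two (fun i => x i ^ 2), ← EuclideanSpace.real_norm_sq_eq, hx, one_pow]
  ext i
  fin_cases i
  · change 2 * x 0 ^ 2 - 1 = x 0 ^ 2 - x 1 ^ 2
    linarith
  · rfl

theorem norm_mapR (hx : ‖x‖ = 1) : ‖mapR x‖ = 1 := by
  rw [mapR_eq_planeSq hx, norm_planeSq, hx, one_pow]

theorem mapR_normalize_add_smul_rotQuarter (hx : ‖x‖ = 1) (hr : |r| < 1) :
    mapR (normalize (x + r • rotQuarter x)) =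
      normalize (mapR x + (2 * r / (1 - r ^ 2)) • rotQuarter (mapR x)) := by
  have hpos : 0 < 1 - r ^ 2 := sub_pos.2 ((sq_lt_one_iff_abs_lt_one r).2 hr)
  have hne : x + r • rotQuarter x ≠ 0 :=
    norm_pos_iff.1 ((hx ▸ one_pos).trans_le (norm_le_norm_add_smul_rotQuarter x r))
  have hscale : planeSq (x + r • rotQuarter x) =
      (1 - r ^ 2) • (planeSq x + (2 * r / (1 - r ^ 2)) • rotQuarter (planeSq x)) := by
    rw [planeSq_add_smul_rotQuarter, smul_add, smul_smul, mul_div_cancel₀ _ hpos.ne']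
  rw [mapR_eq_planeSq (NormedSpace.norm_normalize hne), mapR_eq_planeSq hx, planeSq_normalize,
    hscale, NormedSpace.normalize_smul_of_pos hpos]

end Plane

theorem stmt_15_general (Q M : ℝ) {V : Type*} [Fintype V] {k : V → V → ℝ}
    (hk : ∀ a b, a ≠ b → k a b ≤ 0) {n : V → EuclideanSpace ℝ (Fin 2)} (hn : ∀ a, ‖n a‖ = 1)
    {r : V → ℝ} (hr : ∀ a, |r a| < 1)
    (hle : harmonicEnergy Q M k
        (fun a => mapR (n a) + (2 * r a / (1 - r a ^ 2)) • rotQuarter (mapR (n a)))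
        (fun a => n a + r a • rotQuarter (n a)) ≤
      harmonicEnergy Q M k (fun a => mapR (n a)) n) :
    harmonicEnergy Q M k (fun a => mapR (normalize (n a + r a • rotQuarter (n a))))
        (fun a => normalize (n a + r a • rotQuarter (n a))) ≤
      harmonicEnergy Q M k (fun a => mapR (n a)) n := by
  simp only [mapR_normalize_add_smul_rotQuarter (hn _) (hr _)]
  refine (harmonicEnergy_normalize_le Q M hk (fun a => ?_) (fun a => ?_)).trans hle
  · exact (norm_mapR (hn a)).ge.trans (norm_le_norm_add_smul_rotQuarter _ _)
  · exact (hn a).ge.trans (norm_le_norm_add_smul_rotQuarter _ _)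

/-- discrete energy decay. Let `k` be a symmetric kernel on the finite set `V`
with zero row sums and nonpositive off-diagonal entries, `n : V → ℝ²` unit vectors, `t(a)`
the rotation of `n(a)` by `π/2`, `ν(a) := R(n(a))`, `τ(a)` the rotation of `ν(a)` by `π/2`,
and `γ ∈ (0,1)`. Let `F` be the functional of the algorithm (with `φ(r) = 2r/(1−r²)`),
defined for `r : V → ℝ` with `|r(a)| ≤ γ`. If `r*` satisfies `|r*(a)| ≤ γ` and
`F(r*) ≤ F(0)`, then the updated vectors `n⁺(a) := P_S(n(a) + r*(a)·t(a))`,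
`ν⁺(a) := R(n⁺(a))` do not increase the discrete harmonic energy. -/
theorem stmt_15 (Qc Mc : ℝ) (hQc : 0 < Qc) (hMc : 0 < Mc)
    {V : Type*} [Fintype V] (k : V → V → ℝ)
    (hsym : ∀ a b, k a b = k b a)
    (hrow : ∀ a, ∑ b, k a b = 0)
    (hoff : ∀ a b, a ≠ b → k a b ≤ 0)
    (n : V → EuclideanSpace ℝ (Fin 2)) (hn : ∀ a, ‖n a‖ = 1)
    (t : V → EuclideanSpace ℝ (Fin 2)) (ht : ∀ a, t a = (![-(n a 1), n a 0] : Fin 2 → ℝ))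
    (ν : V → EuclideanSpace ℝ (Fin 2)) (hν : ∀ a, ν a = mapR (n a))
    (τ : V → EuclideanSpace ℝ (Fin 2)) (hτ : ∀ a, τ a = (![-(ν a 1), ν a 0] : Fin 2 → ℝ))
    (γ : ℝ) (hγ : γ ∈ Set.Ioo (0 : ℝ) 1)
    (F : (V → ℝ) → ℝ)
    (hF : ∀ r : V → ℝ, (∀ a, |r a| ≤ γ) →
      F r = -(1 / 2) * ∑ a, ∑ b, k a b *
        (Qc ^ 2 * ‖(ν a + (2 * r a / (1 - r a ^ 2)) • τ a)
            - (ν b + (2 * r b / (1 - r b ^ 2)) • τ b)‖ ^ 2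
          + Mc ^ 2 * ‖(n a + r a • t a) - (n b + r b • t b)‖ ^ 2))
    (rstar : V → ℝ) (hrstar : ∀ a, |rstar a| ≤ γ)
    (hmin : F rstar ≤ F (fun _ => 0))
    (nplus : V → EuclideanSpace ℝ (Fin 2))
    (hnplus : ∀ a, nplus a = ‖n a + rstar a • t a‖⁻¹ • (n a + rstar a • t a))
    (νplus : V → EuclideanSpace ℝ (Fin 2)) (hνplus : ∀ a, νplus a = mapR (nplus a)) :
    -(1 / 2) * ∑ a, ∑ b, k a b *
        (Qc ^ 2 * ‖νplus a - νplus b‖ ^ 2 + Mc ^ 2 * ‖nplus a - nplus b‖ ^ 2)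
      ≤ -(1 / 2) * ∑ a, ∑ b, k a b *
          (Qc ^ 2 * ‖ν a - ν b‖ ^ 2 + Mc ^ 2 * ‖n a - n b‖ ^ 2) := by
  obtain rfl : t = fun a => rotQuarter (n a) := funext fun a => WithLp.ofLp_injective 2 (ht a)
  obtain rfl : τ = fun a => rotQuarter (ν a) := funext fun a => WithLp.ofLp_injective 2 (hτ a)
  obtain rfl : ν = fun a => mapR (n a) := funext hν
  obtain rfl : νplus = fun a => mapR (nplus a) := funext hνplus
  obtain rfl : nplus = fun a => normalize (n a + rstar a • rotQuarter (n a)) := funext hnplus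
  rw [hF rstar hrstar, hF _ fun _ => by simpa using hγ.1.le] at hmin
  exact stmt_15_general Qc Mc hoff hn (fun a => (hrstar a).trans_lt hγ.2)
    (by simpa [harmonicEnergy] using hmin)
end
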